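/- Let p₁,…,pₙ,q ∈ Φ be n+1 distinct proposition symbols. If φ ∈ ML(⊻)(Φ) is a formula such that ‖φ‖ = ‖dep(p₁,…,pₙ,q)‖ (i.e., for every Kripke model K over Φ and team T of K, K,T ⊨ φ iff K,T ⊨ dep(p₁,…,pₙ,q)), then occ_⊻(φ) ≥ 2^n; in particular, φ contains more than 2^n symbols. -/

import Mathlib

namespace MDLTeam

/-- A Kripke model over a set `Φ` of proposition symbols: a set `W` of worlds,
an accessibility relation `R` and a valuation `V`.  A team of `K` is a subset of `K.W`. -/
structure Kripke (Φ : Type) : Type 1 where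
  W : Type
  R : W → W → Prop
  V : Φ → Set W

namespace Kripke

variable {Φ : Type}

/-- `R[T] = {v | ∃ w ∈ T, w R v}` -/
def img (K : Kripke Φ) (T : Set K.W) : Set K.W := {v | ∃ w ∈ T, K.R w v}

/-- `R⁻¹[S] = {w | ∃ v ∈ S, w R v}` -/
def pre (K : Kripke Φ) (S : Set K.W) : Set K.W := {w | ∃ v ∈ S, K.R w v}

/-- `T[R]S` iff `S ⊆ R[T]` and `T ⊆ R⁻¹[S]`. -/
def trs (K : Kripke Φ) (T S : Set K.W) : Prop := S ⊆ K.img T ∧ T ⊆ K.pre S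

end Kripke

/-- Formulas of modal logic `ML(Φ)` in negation normal form. -/
inductive MLFrm (Φ : Type) : Type
  | atom (p : Φ)
  | natom (p : Φ)
  | and (φ ψ : MLFrm Φ)
  | or (φ ψ : MLFrm Φ)
  | dia (φ : MLFrm Φ)
  | box (φ : MLFrm Φ)
  deriving DecidableEq

namespace MLFrm

variable {Φ : Type}

/-- Team semantics for `ML`. -/
def sat (K : Kripke Φ) : MLFrm Φ → Set K.W → Prop
  | atom p, T => T ⊆ K.V p
  | natom p, T => T ∩ K.V p = ∅
  | and φ ψ, T => sat K φ T ∧ sat K ψ T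
  | or φ ψ, T => ∃ T₁ T₂, T = T₁ ∪ T₂ ∧ sat K φ T₁ ∧ sat K ψ T₂
  | dia φ, T => ∃ S, K.trs T S ∧ sat K φ S
  | box φ, T => sat K φ (K.img T)

/-- Standard (pointwise) Kripke semantics for `ML`. -/
def psat (K : Kripke Φ) : MLFrm Φ → K.W → Prop
  | atom p, w => w ∈ K.V p
  | natom p, w => w ∉ K.V p
  | and φ ψ, w => psat K φ w ∧ psat K ψ w
  | or φ ψ, w => psat K φ w ∨ psat K ψ w
  | dia φ, w => ∃ v, K.R w v ∧ psat K φ v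
  | box φ, w => ∀ v, K.R w v → psat K φ v

/-- Modal depth. -/
def md : MLFrm Φ → ℕ
  | atom _ => 0
  | natom _ => 0
  | and φ ψ => max (md φ) (md ψ)
  | or φ ψ => max (md φ) (md ψ)
  | dia φ => md φ + 1
  | box φ => md φ + 1

end MLFrm

/-- Formulas of `ML(⊻)(Φ)`: modal logic with intuitionistic disjunction. -/
inductive MLI (Φ : Type) : Type
  | atom (p : Φ)
  | natom (p : Φ)
  | and (φ ψ : MLI Φ)
  | or (φ ψ : MLI Φ)
  | dia (φ : MLI Φ)
  | box (φ : MLI Φ)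
  | idis (φ ψ : MLI Φ)
  deriving DecidableEq

namespace MLI

variable {Φ : Type}

/-- Team semantics for `ML(⊻)`. -/
def sat (K : Kripke Φ) : MLI Φ → Set K.W → Prop
  | atom p, T => T ⊆ K.V p
  | natom p, T => T ∩ K.V p = ∅
  | and φ ψ, T => sat K φ T ∧ sat K ψ T
  | or φ ψ, T => ∃ T₁ T₂, T = T₁ ∪ T₂ ∧ sat K φ T₁ ∧ sat K ψ T₂
  | dia φ, T => ∃ S, K.trs T S ∧ sat K φ S
  | box φ, T => sat K φ (K.img T)
  | idis φ ψ, T => sat K φ T ∨ sat K ψ T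

/-- Modal depth. -/
def md : MLI Φ → ℕ
  | atom _ => 0
  | natom _ => 0
  | and φ ψ => max (md φ) (md ψ)
  | or φ ψ => max (md φ) (md ψ)
  | dia φ => md φ + 1
  | box φ => md φ + 1
  | idis φ ψ => max (md φ) (md ψ)

/-- The number of occurrences of the connective `⊻` in a formula. -/
def occIdis : MLI Φ → ℕ
  | atom _ => 0
  | natom _ => 0
  | and φ ψ => occIdis φ + occIdis ψ
  | or φ ψ => occIdis φ + occIdis ψ
  | dia φ => occIdis φ
  | box φ => occIdis φ
  | idis φ ψ => occIdis φ + occIdis ψ + 1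

/-- The number of symbols in a formula. -/
def size : MLI Φ → ℕ
  | atom _ => 1
  | natom _ => 2
  | and φ ψ => size φ + size ψ + 1
  | or φ ψ => size φ + size ψ + 1
  | dia φ => size φ + 1
  | box φ => size φ + 1
  | idis φ ψ => size φ + size ψ + 1

end MLI

/-- Formulas of extended modal dependence logic `EMDL(Φ)`: `ML` extended by
dependence atoms `dep(ψ₁,…,ψₙ,θ)` with `ψ₁,…,ψₙ,θ ∈ ML(Φ)`. -/
inductive EMDL (Φ : Type) : Type
  | atom (p : Φ)
  | natom (p : Φ)
  | and (φ ψ : EMDL Φ)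
  | or (φ ψ : EMDL Φ)
  | dia (φ : EMDL Φ)
  | box (φ : EMDL Φ)
  | dep (l : List (MLFrm Φ)) (θ : MLFrm Φ)

namespace EMDL

variable {Φ : Type}

/-- Team semantics for `EMDL`. -/
def sat (K : Kripke Φ) : EMDL Φ → Set K.W → Prop
  | atom p, T => T ⊆ K.V p
  | natom p, T => T ∩ K.V p = ∅
  | and φ ψ, T => sat K φ T ∧ sat K ψ T
  | or φ ψ, T => ∃ T₁ T₂, T = T₁ ∪ T₂ ∧ sat K φ T₁ ∧ sat K ψ T₂
  | dia φ, T => ∃ S, K.trs T S ∧ sat K φ S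
  | box φ, T => sat K φ (K.img T)
  | dep l θ, T => ∀ w ∈ T, ∀ v ∈ T,
      (∀ ψ ∈ l, (MLFrm.sat K ψ {w} ↔ MLFrm.sat K ψ {v})) →
      (MLFrm.sat K θ {w} ↔ MLFrm.sat K θ {v})

end EMDL

/-- `k`-bisimilarity of pointed models. -/
def bisim {Φ : Type} (K K' : Kripke Φ) : ℕ → K.W → K'.W → Prop
  | 0, w, w' => ∀ p, w ∈ K.V p ↔ w' ∈ K'.V p
  | k + 1, w, w' =>
      (∀ p, w ∈ K.V p ↔ w' ∈ K'.V p) ∧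
      (∀ v, K.R w v → ∃ v', K'.R w' v' ∧ bisim K K' k v v') ∧
      (∀ v', K'.R w' v' → ∃ v, K.R w v ∧ bisim K K' k v v')

/-- Team `k`-bisimilarity: `K,T ⇌ₖ K',T'`. -/
def tbisim {Φ : Type} (K K' : Kripke Φ) (k : ℕ) (T : Set K.W) (T' : Set K'.W) : Prop :=
  (∀ w ∈ T, ∃ w' ∈ T', bisim K K' k w w') ∧
  (∀ w' ∈ T', ∃ w ∈ T, bisim K K' k w w')

/-- `M(φ,K)`: the set of maximal teams satisfying `φ` in `K` (for `ML(⊻)`). -/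
def MLI.Mset {Φ : Type} (K : Kripke Φ) (φ : MLI Φ) : Set (Set K.W) :=
  {T | MLI.sat K φ T ∧ ∀ S, MLI.sat K φ S → T ⊆ S → S = T}

/-- `N(φ,K)`: the family of minimal teams not satisfying `φ` in `K` (for `ML(⊻)`). -/
def MLI.Nset {Φ : Type} (K : Kripke Φ) (φ : MLI Φ) : Set (Set K.W) :=
  {T | ¬ MLI.sat K φ T ∧ ∀ S, ¬ MLI.sat K φ S → S ⊆ T → S = T}

/-- The upper dimension `Dim(φ)` of an `ML(⊻)`-formula: the least `m` such that
`|M(φ,K)| ≤ m` for every Kripke model `K` over `Φ`. -/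
noncomputable def MLI.Dim {Φ : Type} (φ : MLI Φ) : ℕ :=
  sInf {m : ℕ | ∀ K : Kripke Φ, (MLI.Mset K φ).Finite ∧ (MLI.Mset K φ).ncard ≤ m}

/-- The lower dimension `dim(φ)` of an `ML(⊻)`-formula: the least `n` such that
`|T| ≤ n` for every Kripke model `K` over `Φ` and every `T ∈ N(φ,K)`. -/
noncomputable def MLI.ldim {Φ : Type} (φ : MLI Φ) : ℕ :=
  sInf {n : ℕ | ∀ K : Kripke Φ, ∀ T ∈ MLI.Nset K φ, T.Finite ∧ T.ncard ≤ n}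

/-- `M(φ,K)`: the set of maximal teams satisfying `φ` in `K` (for `EMDL`). -/
def EMDL.Mset {Φ : Type} (K : Kripke Φ) (φ : EMDL Φ) : Set (Set K.W) :=
  {T | EMDL.sat K φ T ∧ ∀ S, EMDL.sat K φ S → T ⊆ S → S = T}

/-- The upper dimension `Dim(φ)` of an `EMDL`-formula. -/
noncomputable def EMDL.Dim {Φ : Type} (φ : EMDL Φ) : ℕ :=
  sInf {m : ℕ | ∀ K : Kripke Φ, (EMDL.Mset K φ).Finite ∧ (EMDL.Mset K φ).ncard ≤ m}

/-- The `Ψ`-type of a state: `type_Ψ(K,w) = {ψ ∈ Ψ | K,w ⊨ ψ}`. -/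
def typeSet {Φ : Type} (K : Kripke Φ) (Ψ : Set (MLFrm Φ)) (w : K.W) : Set (MLFrm Φ) :=
  {ψ | ψ ∈ Ψ ∧ MLFrm.psat K ψ w}

/-- `tset_Ψ(K,T) = {type_Ψ(K,w) | w ∈ T}`. -/
def tset {Φ : Type} (K : Kripke Φ) (Ψ : Set (MLFrm Φ)) (T : Set K.W) : Set (Set (MLFrm Φ)) :=
  typeSet K Ψ '' T

/-!
In a fixed Kripke model, the teams satisfying an `ML(⊻)`-formula `φ` are the subteams of finitely
many teams. Under `∧` and `∨` the numbers of these teams multiply, under `⊻` they add up, and the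
modalities do not increase them, so `2 ^ occ_⊻(φ)` teams suffice and there are at most that many
maximal ones. On the other hand, if the states of the model realize every combination of truth
values of `p₁,…,pₙ,q`, then the graph of each Boolean function of `n` arguments is a maximal team
satisfying `dep(p₁,…,pₙ,q)`, so there are at least `2 ^ 2 ^ n` of these.
-/

namespace Kripke

variable {Φ : Type} (K : Kripke Φ)

theorem img_subset_iff_subset_compl_pre_compl {T S : Set K.W} :
    K.img T ⊆ S ↔ T ⊆ (K.pre Sᶜ)ᶜ := by
  constructor
  · rintro hTS w hw ⟨v, hv, hwv⟩
    exact hv (hTS ⟨w, hw, hwv⟩)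
  · rintro hT v ⟨w, hw, hwv⟩
    by_contra hv
    exact hT hw ⟨v, hv, hwv⟩

theorem exists_trs_subset_iff_subset_pre {T S : Set K.W} :
    (∃ S', K.trs T S' ∧ S' ⊆ S) ↔ T ⊆ K.pre S := by
  constructor
  · rintro ⟨S', ⟨-, hT⟩, hS'⟩ w hw
    obtain ⟨v, hv, hwv⟩ := hT hw
    exact ⟨v, hS' hv, hwv⟩
  · intro hT
    refine ⟨K.img T ∩ S, ⟨Set.inter_subset_left, fun w hw => ?_⟩, Set.inter_subset_right⟩
    obtain ⟨v, hv, hwv⟩ := hT hw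
    exact ⟨v, ⟨⟨w, hw, hwv⟩, hv⟩, hwv⟩

end Kripke

namespace MLI

variable {Φ : Type} (K : Kripke Φ) (φ : MLI Φ)

theorem occIdis_lt_size : occIdis φ < size φ := by
  induction φ <;> simp only [occIdis, size] <;> omega

open scoped Classical in
/-- A finite family of teams whose subteams are exactly the teams of `K` satisfying `φ`.
It may contain teams that are not maximal, so it only bounds `Mset K φ` from above. -/
noncomputable def generators (K : Kripke Φ) : MLI Φ → Finset (Set K.W)
  | atom p => {K.V p}
  | natom p => {(K.V p)ᶜ}
  | and φ ψ => Finset.image₂ (· ∩ ·) (generators K φ) (generators K ψ)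
  | or φ ψ => Finset.image₂ (· ∪ ·) (generators K φ) (generators K ψ)
  | dia φ => (generators K φ).image K.pre
  | box φ => (generators K φ).image fun S => (K.pre Sᶜ)ᶜ
  | idis φ ψ => generators K φ ∪ generators K ψ

theorem card_generators_le : (generators K φ).card ≤ 2 ^ occIdis φ := by
  induction φ with
  | atom p | natom p => exact (Finset.card_singleton _).le
  | and φ ψ ihφ ihψ | or φ ψ ihφ ihψ =>
    rw [occIdis, pow_add]
    exact (Finset.card_image₂_le _ _ _).trans (Nat.mul_le_mul ihφ ihψ)
  | dia φ ih | box φ ih => exact Finset.card_image_le.trans ih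
  | idis φ ψ ihφ ihψ =>
    calc (generators K (idis φ ψ)).card
        ≤ (generators K φ).card + (generators K ψ).card := Finset.card_union_le _ _
      _ ≤ 2 ^ (occIdis φ + occIdis ψ) + 2 ^ (occIdis φ + occIdis ψ) := by
          gcongr
          · exact ihφ.trans (Nat.pow_le_pow_right two_pos (Nat.le_add_right _ _))
          · exact ihψ.trans (Nat.pow_le_pow_right two_pos (Nat.le_add_left _ _))
      _ = 2 ^ occIdis (idis φ ψ) := by rw [occIdis, pow_succ, mul_two]

theorem sat_iff_exists_generators {T : Set K.W} :
    sat K φ T ↔ ∃ S ∈ generators K φ, T ⊆ S := by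
  induction φ generalizing T with
  | atom p => simp only [sat, generators, Finset.mem_singleton, exists_eq_left]
  | natom p =>
    simp only [sat, generators, Finset.mem_singleton, exists_eq_left,
      Set.subset_compl_iff_disjoint_right, Set.disjoint_iff_inter_eq_empty]
  | and φ ψ ihφ ihψ =>
    simp only [sat, generators, ihφ, ihψ, Finset.exists_mem_image₂, Set.subset_inter_iff]
    grind
  | or φ ψ ihφ ihψ =>
    simp only [sat, generators, ihφ, ihψ, Finset.exists_mem_image₂]
    constructor
    · rintro ⟨T₁, T₂, rfl, ⟨S₁, hS₁, hT₁⟩, ⟨S₂, hS₂, hT₂⟩⟩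
      exact ⟨S₁, hS₁, S₂, hS₂, Set.union_subset_union hT₁ hT₂⟩
    · rintro ⟨S₁, hS₁, S₂, hS₂, hT⟩
      have hcover : T = T ∩ S₁ ∪ T ∩ S₂ := by
        rw [← Set.inter_union_distrib_left, Set.inter_eq_left.2 hT]
      exact ⟨T ∩ S₁, T ∩ S₂, hcover, ⟨S₁, hS₁, Set.inter_subset_right⟩,
        ⟨S₂, hS₂, Set.inter_subset_right⟩⟩
  | dia φ ih =>
    simp only [sat, generators, ih, Finset.exists_mem_image,
      ← K.exists_trs_subset_iff_subset_pre]
    grind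
  | box φ ih =>
    simp only [sat, generators, ih, Finset.exists_mem_image,
      K.img_subset_iff_subset_compl_pre_compl]
  | idis φ ψ ihφ ihψ =>
    simp only [sat, generators, ihφ, ihψ, Finset.mem_union, or_and_right, exists_or]

theorem Mset_subset_generators : Mset K φ ⊆ generators K φ := by
  rintro T ⟨hT, hmax⟩
  obtain ⟨S, hS, hTS⟩ := (sat_iff_exists_generators K φ).1 hT
  have hS_sat : sat K φ S := (sat_iff_exists_generators K φ).2 ⟨S, hS, subset_rfl⟩
  exact hmax S hS_sat hTS ▸ hS

theorem encard_Mset_le : (Mset K φ).encard ≤ (2 ^ occIdis φ : ℕ) :=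
  calc (Mset K φ).encard ≤ (generators K φ : Set (Set K.W)).encard :=
        Set.encard_le_encard (Mset_subset_generators K φ)
    _ = (generators K φ).card := Set.encard_coe_eq_coe_finsetCard _
    _ ≤ (2 ^ occIdis φ : ℕ) := Nat.cast_le.2 (card_generators_le K φ)

end MLI

namespace Kripke

variable {Φ ι : Type} (K : Kripke Φ) (ψ : ι → MLFrm Φ) (θ : MLFrm Φ)

/-- The truth values of the formulas `ψ i` at the state `w`, as evaluated by dependence atoms,
that is, at the singleton team `{w}`. -/
def truthVector (w : K.W) : ι → Prop := fun i => MLFrm.sat K (ψ i) {w}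

/-- The team on which the truth value of `θ` is the Boolean function `f` of those of the `ψ i`.
If all truth values are realized in `K`, such teams are maximal for `dep(ψ₁,…,ψₙ,θ)`. -/
def graphTeam (f : (ι → Prop) → Prop) : Set K.W :=
  {w | MLFrm.sat K θ {w} ↔ f (K.truthVector ψ w)}

variable {K ψ θ}

theorem graphTeam_injective
    (hK : Function.Surjective fun w => (K.truthVector ψ w, MLFrm.sat K θ {w})) :
    Function.Injective (K.graphTeam ψ θ) := by
  intro f g hfg
  ext a
  obtain ⟨w, hw⟩ := hK (a, f a)
  obtain ⟨rfl, hθ⟩ := Prod.mk.inj hw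
  have hwf : w ∈ K.graphTeam ψ θ f := hθ.to_iff
  have hwg : w ∈ K.graphTeam ψ θ g := hfg ▸ hwf
  exact hwf.symm.trans hwg

end Kripke

namespace EMDL

variable {Φ : Type} {K : Kripke Φ} {n : ℕ} {ψ : Fin n → MLFrm Φ} {θ : MLFrm Φ}

theorem sat_dep_ofFn_iff {T : Set K.W} :
    sat K (dep (List.ofFn ψ) θ) T ↔ ∀ w ∈ T, ∀ v ∈ T,
      K.truthVector ψ w = K.truthVector ψ v → (MLFrm.sat K θ {w} ↔ MLFrm.sat K θ {v}) := by
  simp only [sat, List.forall_mem_ofFn_iff, funext_iff, Kripke.truthVector, eq_iff_iff]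

theorem graphTeam_mem_Mset_dep
    (hK : Function.Surjective fun w => (K.truthVector ψ w, MLFrm.sat K θ {w}))
    (f : (Fin n → Prop) → Prop) :
    K.graphTeam ψ θ f ∈ Mset K (dep (List.ofFn ψ) θ) := by
  refine ⟨sat_dep_ofFn_iff.2 fun w hw v hv hwv => ?_, fun S hS hfS => ?_⟩
  · exact hw.trans (hwv ▸ hv.symm)
  · refine (Set.Subset.antisymm hfS fun w hw => ?_).symm
    -- The graph has a state `v` with the truth vector of `w`, and `S` forces `w` to agree with it.
    obtain ⟨v, hv⟩ := hK (K.truthVector ψ w, f (K.truthVector ψ w))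
    obtain ⟨hvw, hθ⟩ := Prod.mk.inj hv
    have hvf : v ∈ K.graphTeam ψ θ f := hθ.to_iff.trans (congrArg f hvw).symm.to_iff
    exact (sat_dep_ofFn_iff.1 hS w hw v (hfS hvf) hvw.symm).trans hθ.to_iff

theorem two_pow_two_pow_le_encard_Mset_dep
    (hK : Function.Surjective fun w => (K.truthVector ψ w, MLFrm.sat K θ {w})) :
    (2 ^ 2 ^ n : ℕ) ≤ (Mset K (dep (List.ofFn ψ) θ)).encard :=
  calc ((2 ^ 2 ^ n : ℕ) : ℕ∞) = (Set.univ : Set ((Fin n → Prop) → Prop)).encard := by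
        simp only [Set.encard_univ, ENat.card_eq_coe_fintype_card, Fintype.card_fun,
          Fintype.card_prop, Fintype.card_fin]
    _ = (K.graphTeam ψ θ '' Set.univ).encard :=
        ((Kripke.graphTeam_injective hK).encard_image _).symm
    _ ≤ (Mset K (dep (List.ofFn ψ) θ)).encard :=
        Set.encard_le_encard (Set.image_subset_iff.2 fun f _ => graphTeam_mem_Mset_dep hK f)

end EMDL

/-- The edgeless Kripke model whose states are all the valuations of the symbols in `Φ`. -/
def valuationModel (Φ : Type) : Kripke Φ where
  W := Set Φ
  R := fun _ _ => False
  V := fun p => {w | p ∈ w}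

theorem valuationModel_truth_surjective {Φ ι : Type} {ps : ι → Φ} {q : Φ}
    (hinj : Function.Injective ps) (hq : ∀ i, ps i ≠ q) :
    Function.Surjective fun w : (valuationModel Φ).W =>
      ((valuationModel Φ).truthVector (fun i => MLFrm.atom (ps i)) w,
        MLFrm.sat (valuationModel Φ) (MLFrm.atom q) {w}) := by
  rintro ⟨a, b⟩
  let w : Set Φ := {p | (∃ i, ps i = p ∧ a i) ∨ (p = q ∧ b)}
  have hps : ∀ i, ps i ∈ w ↔ a i := by
    simp only [w, Set.mem_ofPred_eq, hinj.eq_iff, exists_eq_left, hq, false_and, or_false,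
      implies_true]
  have hqw : q ∈ w ↔ b := by
    simp only [w, Set.mem_ofPred_eq, hq, false_and, exists_false, true_and, false_or]
  refine ⟨w, Prod.ext (funext fun i => propext ?_) (propext ?_)⟩
  · exact Set.singleton_subset_iff.trans (hps i)
  · exact Set.singleton_subset_iff.trans hqw

theorem emdl_to_mli_blowup_general {Φ : Type} {K : Kripke Φ} {n : ℕ} {ψ : Fin n → MLFrm Φ}
    {θ : MLFrm Φ} (hK : Function.Surjective fun w => (K.truthVector ψ w, MLFrm.sat K θ {w}))
    (φ : MLI Φ) (hφ : ∀ T : Set K.W, MLI.sat K φ T ↔ EMDL.sat K (EMDL.dep (List.ofFn ψ) θ) T) :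
    2 ^ n ≤ MLI.occIdis φ ∧ 2 ^ n < MLI.size φ := by
  have hMset : MLI.Mset K φ = EMDL.Mset K (EMDL.dep (List.ofFn ψ) θ) := by
    simp only [MLI.Mset, EMDL.Mset, hφ]
  have hpow : 2 ^ 2 ^ n ≤ 2 ^ MLI.occIdis φ :=
    Nat.cast_le.1 <|
      (EMDL.two_pow_two_pow_le_encard_Mset_dep hK).trans (hMset ▸ MLI.encard_Mset_le K φ)
  have hocc : 2 ^ n ≤ MLI.occIdis φ := (Nat.pow_le_pow_iff_right one_lt_two).1 hpow
  exact ⟨hocc, hocc.trans_lt (MLI.occIdis_lt_size φ)⟩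

/-- If `φ ∈ ML(⊻)(Φ)` defines the same class as the dependence atom
`dep(p₁,…,pₙ,q)` on `n+1` distinct proposition symbols, then `occ_⊻(φ) ≥ 2^n`;
in particular `φ` contains more than `2^n` symbols. -/
theorem emdl_to_mli_blowup {Φ : Type} (n : ℕ) (ps : Fin n → Φ) (q : Φ)
    (hinj : Function.Injective ps) (hq : ∀ i, ps i ≠ q) (φ : MLI Φ)
    (hφ : ∀ (K : Kripke Φ) (T : Set K.W),
      MLI.sat K φ T ↔
        EMDL.sat K (EMDL.dep (List.ofFn fun i => MLFrm.atom (ps i)) (MLFrm.atom q)) T) :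
    2 ^ n ≤ MLI.occIdis φ ∧ 2 ^ n < MLI.size φ := by
  exact emdl_to_mli_blowup_general (valuationModel_truth_surjective hinj hq) φ (hφ _)

end MDLTeam
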